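/- Let $G$ be a linearly surjunctive group and let $K$ be a field. Then the group ring $K[G]$ is stably finite. -/

import Mathlib

/-!
A matrix over `k[G]` acts on configurations `G → k^d` as a linear cellular automaton, and this
action is a faithful ring homomorphism. If `k` is a finite field and `A * B = 1`, the automaton of
`B` is injective, hence bijective by linear surjunctivity, so `B * A = 1`.

Over any commutative ring `K`, the coefficients of `A` and `B` lie in a finitely generated subring
`R`, whose residue fields are finite by the Nullstellensatz over `ℤ`. The idempotent matrix
`1 - B * A` therefore vanishes modulo every maximal ideal of `R`. Being idempotent, it generates a
coefficient ideal `J` with `J = J²`; as `J` is finitely generated and contained in the Jacobson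
radical, Nakayama's lemma gives `J = 0`.
-/

/-- A ring `R` is stably finite if for every `d ≥ 1` and all `d × d` matrices `A B` over `R`,
`A * B = 1` implies `B * A = 1`. -/
def IsStablyFinite (R : Type*) [Ring R] : Prop :=
  ∀ d : ℕ, 1 ≤ d → ∀ A B : Matrix (Fin d) (Fin d) R, A * B = 1 → B * A = 1

/-- A group `G` is linearly surjunctive if for every finite field `k` and every
finite-dimensional `k`-vector space `A`, every injective `k`-linear `G`-equivariant
map `τ : A^G → A^G` which is continuous for the prodiscrete topology is surjective. -/
def LinearlySurjunctive (G : Type*) [Group G] : Prop :=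
  ∀ (k : Type) [Field k] [Finite k]
    (A : Type) [AddCommGroup A] [Module k A] [FiniteDimensional k A]
    (τ : (G → A) → (G → A)),
    Function.Injective τ →
    IsLinearMap k τ →
    (∀ (g : G) (x : G → A), τ (fun h => x (g * h)) = fun h => τ x (g * h)) →
    @Continuous (G → A) (G → A)
      (@Pi.topologicalSpace G (fun _ => A) fun _ => ⊥)
      (@Pi.topologicalSpace G (fun _ => A) fun _ => ⊥) τ →
    Function.Surjective τ

open Function

section StablyFinite

lemma isStablyFinite_iff_isStablyFiniteRing {R : Type*} [Ring R] :
    IsStablyFinite R ↔ IsStablyFiniteRing R := by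
  simp only [IsStablyFinite, isStablyFiniteRing_iff, isDedekindFiniteMonoid_iff]
  refine ⟨fun h d A B hAB => ?_, fun h d _ _ _ => h d⟩
  obtain rfl | hd := Nat.eq_zero_or_pos d
  · exact Subsingleton.elim _ _
  · exact h d hd A B hAB

lemma isIdempotentElem_one_sub_mul {R : Type*} [Ring R] {a b : R} (h : a * b = 1) :
    IsIdempotentElem (1 - b * a) := by
  refine IsIdempotentElem.one_sub ?_
  rw [IsIdempotentElem, mul_assoc, ← mul_assoc a, h, one_mul]

end StablyFinite

section Automaton

variable (k G ι : Type*) [CommSemiring k] [Monoid G] [Fintype ι] [DecidableEq ι]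

/-- The right regular representation on functions, `(g • x) h = x (h * g)`. The translations are on
the right so that they commute with left shifts. -/
def rightRegular : G →* Module.End k (G → k) where
  toFun g := LinearMap.funLeft k k (· * g)
  map_one' := by ext; simp [LinearMap.funLeft]
  map_mul' a b := by ext; simp [LinearMap.funLeft, mul_assoc]

/-- The action of `k[G]` on `k^G` by linear cellular automata. -/
noncomputable def automaton : MonoidAlgebra k G →ₐ[k] Module.End k (G → k) :=
  MonoidAlgebra.lift k (Module.End k (G → k)) G (rightRegular k G)

/-- The action of matrices over `k[G]` by linear cellular automata on `(k^ι)^G`, obtained from the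
action on `(k^G)^ι`. -/
noncomputable def matrixAutomaton :
    Matrix ι ι (MonoidAlgebra k G) →+* Module.End k (G → ι → k) :=
  ((Equiv.piComm fun (_ : ι) (_ : G) => k).toLinearEquiv
    (R := k) ⟨fun _ _ => rfl, fun _ _ => rfl⟩).conjRingEquiv.toRingHom.comp
    ((endVecRingEquivMatrixEnd ι k (G → k)).symm.toRingHom.comp
      (automaton k G).toRingHom.mapMatrix)

variable {k G ι}

lemma automaton_apply (a : MonoidAlgebra k G) (x : G → k) (h : G) :
    automaton k G a x h = ∑ g ∈ a.coeff.support, a.coeff g * x (h * g) := by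
  simp [automaton, MonoidAlgebra.lift_apply, Finsupp.sum, rightRegular, LinearMap.funLeft,
    LinearMap.sum_apply]

lemma automaton_single_one [DecidableEq G] (a : MonoidAlgebra k G) (g : G) :
    automaton k G a (Pi.single g 1) 1 = a.coeff g := by
  simp [automaton_apply, Pi.single_apply, eq_comm]

lemma automaton_injective : Injective (automaton k G) := by
  classical
  intro a b hab
  ext g
  rw [← automaton_single_one a, hab, automaton_single_one]

lemma matrixAutomaton_apply (M : Matrix ι ι (MonoidAlgebra k G)) (x : G → ι → k) (h : G) (i : ι) :
    matrixAutomaton k G ι M x h i =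
      ∑ j, ∑ g ∈ (M i j).coeff.support, (M i j).coeff g * x (h * g) j := by
  calc
    _ = (∑ j, automaton k G (M i j) fun h' => x h' j) h := rfl
    _ = _ := by simp only [Finset.sum_apply, automaton_apply]

lemma matrixAutomaton_injective : Injective (matrixAutomaton k G ι) := by
  simp only [matrixAutomaton, RingHom.coe_comp]
  exact (RingEquiv.injective _).comp ((RingEquiv.injective _).comp
    (Matrix.map_injective automaton_injective))

lemma matrixAutomaton_comp_mul_left (M : Matrix ι ι (MonoidAlgebra k G)) (g : G)
    (x : G → ι → k) :
    matrixAutomaton k G ι M (fun h => x (g * h)) = fun h => matrixAutomaton k G ι M x (g * h) := by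
  ext h i
  simp only [matrixAutomaton_apply, mul_assoc]

lemma continuous_matrixAutomaton [TopologicalSpace k] [IsTopologicalSemiring k]
    (M : Matrix ι ι (MonoidAlgebra k G)) : Continuous (matrixAutomaton k G ι M) := by
  refine continuous_pi fun h => continuous_pi fun i => ?_
  simp only [matrixAutomaton_apply]
  fun_prop

end Automaton

section FiniteField

variable {G : Type*} [Group G]

lemma LinearlySurjunctive.surjective_matrixAutomaton (hG : LinearlySurjunctive G)
    {k ι : Type} [Field k] [Finite k] [Fintype ι] [DecidableEq ι]
    {M : Matrix ι ι (MonoidAlgebra k G)} (hM : Injective (matrixAutomaton k G ι M)) :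
    Surjective (matrixAutomaton k G ι M) := by
  let _ : TopologicalSpace k := ⊥
  have : DiscreteTopology k := ⟨rfl⟩
  refine hG k (ι → k) _ hM (LinearMap.isLinear _) (matrixAutomaton_comp_mul_left M) ?_
  rw [← DiscreteTopology.eq_bot (α := ι → k)]
  exact continuous_matrixAutomaton M

lemma LinearlySurjunctive.isDedekindFiniteMonoid_matrix (hG : LinearlySurjunctive G)
    (k ι : Type) [Field k] [Finite k] [Fintype ι] [DecidableEq ι] :
    IsDedekindFiniteMonoid (Matrix ι ι (MonoidAlgebra k G)) := by
  refine ⟨fun {A B} hAB => matrixAutomaton_injective ?_⟩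
  have hid : matrixAutomaton k G _ A * matrixAutomaton k G _ B = 1 := by
    rw [← map_mul, hAB, map_one]
  have hleft : LeftInverse (matrixAutomaton k G _ A) (matrixAutomaton k G _ B) :=
    LinearMap.congr_fun hid
  have hright := hleft.rightInverse_of_surjective (hG.surjective_matrixAutomaton hleft.injective)
  rw [map_mul, map_one]
  exact LinearMap.ext hright

lemma LinearlySurjunctive.isStablyFiniteRing_of_finite_field (hG : LinearlySurjunctive G)
    (k : Type*) [Field k] [Finite k] : IsStablyFiniteRing (MonoidAlgebra k G) := by
  have : IsStablyFiniteRing (MonoidAlgebra (Shrink.{0} k) G) :=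
    ⟨fun d => hG.isDedekindFiniteMonoid_matrix (Shrink.{0} k) (Fin d)⟩
  let e := MonoidAlgebra.mapRingEquiv G (Shrink.ringEquiv.{0} k)
  exact .of_injective e.symm e.symm.injective

end FiniteField

section Coefficients

variable {R S G l m n : Type*}

/-- The set of all coefficients of the entries of a matrix over a monoid algebra. -/
def coeffs [Semiring R] (A : Matrix m n (MonoidAlgebra R G)) : Set R :=
  ⋃ i, ⋃ j, Set.range (A i j).coeff

section Semiring

variable [Semiring R] [Semiring S]

lemma coeffs_subset_iff {A : Matrix m n (MonoidAlgebra R G)} {s : Set R} :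
    coeffs A ⊆ s ↔ ∀ i j g, (A i j).coeff g ∈ s := by
  simp only [coeffs, Set.iUnion_subset_iff, Set.range_subset_iff]

lemma finite_coeffs [Finite m] [Finite n] (A : Matrix m n (MonoidAlgebra R G)) :
    (coeffs A).Finite :=
  Set.finite_iUnion fun _ => Set.finite_iUnion fun _ => Finsupp.finite_range _

lemma exists_map_eq_of_coeffs_subset_range (f : R →+ S) {A : Matrix m n (MonoidAlgebra S G)}
    (hA : coeffs A ⊆ Set.range f) :
    ∃ A' : Matrix m n (MonoidAlgebra R G), A'.map (MonoidAlgebra.map f) = A := by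
  have hentry (i j) : A i j ∈ Set.range (MonoidAlgebra.map (M := G) f) := by
    rw [MonoidAlgebra.range_map]
    exact coeffs_subset_iff.1 hA i j
  choose A' hA' using hentry
  exact ⟨Matrix.of A', Matrix.ext hA'⟩

end Semiring

section CommSemiring

variable [CommSemiring R]

/-- The ideal generated by the coefficients of a matrix over a monoid algebra. -/
def coeffIdeal (A : Matrix m n (MonoidAlgebra R G)) : Ideal R :=
  Ideal.span (coeffs A)

lemma coeffIdeal_le_iff {A : Matrix m n (MonoidAlgebra R G)} {I : Ideal R} :
    coeffIdeal A ≤ I ↔ ∀ i j g, (A i j).coeff g ∈ I :=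
  Ideal.span_le.trans coeffs_subset_iff

lemma coeff_mem_coeffIdeal (A : Matrix m n (MonoidAlgebra R G)) (i : m) (j : n) (g : G) :
    (A i j).coeff g ∈ coeffIdeal A :=
  coeffIdeal_le_iff.1 le_rfl i j g

lemma coeffIdeal_fg [Finite m] [Finite n] (A : Matrix m n (MonoidAlgebra R G)) :
    (coeffIdeal A).FG :=
  Submodule.fg_span (finite_coeffs A)

lemma coeffIdeal_eq_bot {A : Matrix m n (MonoidAlgebra R G)} : coeffIdeal A = ⊥ ↔ A = 0 := by
  rw [eq_bot_iff, coeffIdeal_le_iff, ← Matrix.ext_iff]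
  simp [MonoidAlgebra.ext_iff, Finsupp.ext_iff]

lemma coeffIdeal_mul_le [Monoid G] [Fintype n] (A : Matrix m n (MonoidAlgebra R G))
    (B : Matrix n l (MonoidAlgebra R G)) : coeffIdeal (A * B) ≤ coeffIdeal A * coeffIdeal B := by
  classical
  refine coeffIdeal_le_iff.2 fun i j g => ?_
  simp only [Matrix.mul_apply, MonoidAlgebra.coeff_sum, Finsupp.finsetSum_apply,
    MonoidAlgebra.coeff_mul, Finsupp.sum]
  refine sum_mem fun s _ => sum_mem fun a _ => sum_mem fun b _ => ?_
  split_ifs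
  · exact Ideal.mul_mem_mul (coeff_mem_coeffIdeal A i s a) (coeff_mem_coeffIdeal B s j b)
  · exact zero_mem _

end CommSemiring

section CommRing

variable [CommRing R]

lemma coeffIdeal_le_iff_map_mk_eq_zero {A : Matrix m n (MonoidAlgebra R G)} {I : Ideal R} :
    coeffIdeal A ≤ I ↔ A.map (MonoidAlgebra.map (Ideal.Quotient.mk I : R →+ R ⧸ I)) = 0 := by
  rw [coeffIdeal_le_iff, ← Matrix.ext_iff]
  simp [MonoidAlgebra.ext_iff, Finsupp.ext_iff, Ideal.Quotient.eq_zero_iff_mem]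

lemma eq_zero_of_isIdempotentElem_of_coeffIdeal_le [Monoid G] [Fintype n]
    {E : Matrix n n (MonoidAlgebra R G)} (hE : IsIdempotentElem E)
    (hmax : ∀ I : Ideal R, I.IsMaximal → coeffIdeal E ≤ I) : E = 0 := by
  have hsq : coeffIdeal E ≤ coeffIdeal E • coeffIdeal E := by
    simpa only [hE.eq, smul_eq_mul] using coeffIdeal_mul_le E E
  have hjac : coeffIdeal E ≤ (⊥ : Ideal R).jacobson := le_sInf fun I hI => hmax I hI.2
  exact coeffIdeal_eq_bot.1 <|
    Submodule.eq_bot_of_le_smul_of_le_jacobson_bot _ _ (coeffIdeal_fg E) hsq hjac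

end CommRing

end Coefficients

section Reduction

variable {R G : Type*} [Monoid G]

lemma isStablyFiniteRing_monoidAlgebra_of_forall_quotient [CommRing R]
    (h : ∀ I : Ideal R, I.IsMaximal → IsStablyFiniteRing (MonoidAlgebra (R ⧸ I) G)) :
    IsStablyFiniteRing (MonoidAlgebra R G) := by
  refine ⟨fun d => ⟨fun {A B} hAB => (sub_eq_zero.1 ?_).symm⟩⟩
  refine eq_zero_of_isIdempotentElem_of_coeffIdeal_le (isIdempotentElem_one_sub_mul hAB)
    fun I hI => coeffIdeal_le_iff_map_mk_eq_zero.2 ?_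
  have := h I hI
  let φ := (MonoidAlgebra.mapRingHom G (Ideal.Quotient.mk I)).mapMatrix (m := Fin d)
  have hφ : φ A * φ B = 1 := by rw [← map_mul, hAB, map_one]
  change φ (1 - B * A) = 0
  rw [map_sub, map_one, map_mul, mul_eq_one_symm hφ, sub_self]

lemma isStablyFiniteRing_monoidAlgebra_of_forall_fg [Ring R]
    (h : ∀ S : Subalgebra ℤ R, S.FG → IsStablyFiniteRing (MonoidAlgebra S G)) :
    IsStablyFiniteRing (MonoidAlgebra R G) := by
  refine ⟨fun d => ⟨fun {A B} hAB => ?_⟩⟩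
  obtain ⟨S, hS, hAS, hBS⟩ : ∃ S : Subalgebra ℤ R, S.FG ∧ coeffs A ⊆ S ∧ coeffs B ⊆ S :=
    ⟨Algebra.adjoin ℤ (coeffs A ∪ coeffs B),
      Subalgebra.fg_def.2 ⟨_, (finite_coeffs A).union (finite_coeffs B), rfl⟩,
      Set.subset_union_left.trans Algebra.subset_adjoin,
      Set.subset_union_right.trans Algebra.subset_adjoin⟩
  have := h S hS
  let f : S →+* R := S.val
  have hrange : Set.range f = S := Subtype.range_val
  let φ := (MonoidAlgebra.mapRingHom G f).mapMatrix (m := Fin d)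
  have hφ : Injective φ :=
    Matrix.map_injective (MonoidAlgebra.map_injective (f : S →+ R) Subtype.val_injective)
  obtain ⟨A', rfl : φ A' = A⟩ :=
    exists_map_eq_of_coeffs_subset_range (f : S →+ R) (hAS.trans hrange.ge)
  obtain ⟨B', rfl : φ B' = B⟩ :=
    exists_map_eq_of_coeffs_subset_range (f : S →+ R) (hBS.trans hrange.ge)
  rw [← map_mul, map_eq_one_iff φ hφ] at hAB ⊢
  exact mul_eq_one_symm hAB

end Reduction

section ResidueField

lemma isJacobsonRing_int : IsJacobsonRing ℤ := by
  refine isJacobsonRing_iff_prime_eq.2 fun P hP => ?_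
  obtain rfl | hbot := eq_or_ne P ⊥
  · refine eq_bot_iff.2 fun n hn => Ideal.mem_bot.2 ?_
    have hunit : IsUnit (n * n + 1) := Ideal.mem_jacobson_bot.1 hn n
    rcases Int.isUnit_iff.1 hunit with h | h <;> nlinarith
  · have := hP.isMaximal hbot
    exact Ideal.jacobson_eq_self_of_isMaximal

lemma finite_of_finiteType_int (F : Type*) [Field F] [Algebra ℤ F] [Algebra.FiniteType ℤ F] :
    Finite F := by
  obtain rfl : ‹Algebra ℤ F› = Ring.toIntAlgebra F := Subsingleton.elim _ _
  have := isJacobsonRing_int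
  have : Module.Finite ℤ F := finite_of_finite_type_of_isJacobsonRing ℤ F
  have hker : ¬ Injective (algebraMap ℤ F) := fun hinj =>
    Int.not_isField (isField_of_isIntegral_of_isField hinj (Field.toIsField F))
  simp only [injective_iff_map_eq_zero, not_forall] at hker
  obtain ⟨n, hn, hn0⟩ := hker
  refine Module.finite_of_fg_torsion F fun {x} => ⟨⟨n, mem_nonZeroDivisors_of_ne_zero hn0⟩, ?_⟩
  rw [Submonoid.mk_smul, Algebra.smul_def, hn, zero_mul]

lemma finite_quotient_of_finiteType_int (R : Type*) [CommRing R] [Algebra.FiniteType ℤ R]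
    (I : Ideal R) [I.IsMaximal] : Finite (R ⧸ I) := by
  let _ := Ideal.Quotient.field I
  exact finite_of_finiteType_int (R ⧸ I)

end ResidueField

theorem linearly_surjunctive_group_ring_stably_finite_general
    {G : Type*} [Group G] (hG : LinearlySurjunctive G)
    (K : Type*) [CommRing K] : IsStablyFinite (MonoidAlgebra K G) := by
  refine isStablyFinite_iff_isStablyFiniteRing.2 <|
    isStablyFiniteRing_monoidAlgebra_of_forall_fg fun R hR =>
    isStablyFiniteRing_monoidAlgebra_of_forall_quotient fun I hI => ?_
  have : Algebra.FiniteType ℤ R := R.fg_iff_finiteType.1 hR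
  have : Finite (R ⧸ I) := finite_quotient_of_finiteType_int R I
  let _ := Ideal.Quotient.field I
  exact hG.isStablyFiniteRing_of_finite_field (R ⧸ I)

theorem linearly_surjunctive_group_ring_stably_finite
    {G : Type*} [Group G] (hG : LinearlySurjunctive G)
    (K : Type*) [Field K] : IsStablyFinite (MonoidAlgebra K G) :=
  linearly_surjunctive_group_ring_stably_finite_general hG K
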